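/- arXiv:1907.04400 — 2 statements merged into one kernel-verified Lean document; each statement's English description precedes it below -/
import Mathlib

section
/- Let A be a finite allocation (a finite set of (type, slot) pairs with pairwise distinct slots) that obeys the gap rules given by a k×k matrix G. Let θ_l be an ad type and s* a slot strictly greater than every slot used in A, and suppose that for every ad type θ_m that appears in A, the largest slot s_m occupied by an ad of type θ_m in A satisfies s* − s_m > G_{ml}. Then the allocation A ∪ {(θ_l, s*)} also obeys the gap rules. (This is the augmentation property underlying the correctness of the dynamic program, whose states record only, for each type, the number of allocated ads and the last slot occupied by that type.) -/
/-!
Among the ads of a fixed type, the last one leaves the smallest gap before the new slot `t`, because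
`t - s` decreases in `s`. So checking the gap rule against the last slot of each type, the only slot
of that type recorded in a state of the dynamic program, checks it against every ad. No ad comes
after the new one, since `t` exceeds every slot in use.
-/

/-- The gap rules for an allocation `A` of (type, slot) pairs: an ad of type `i` and a later ad of
type `j` are more than `G i j` slots apart. Distinctness of the slots is not part of it; that is
`Set.InjOn Prod.snd A`. -/
def ObeysGapRules {T S : Type*} [LT S] [Sub S] (G : T → T → S) (A : Set (T × S)) : Prop :=
  ∀ p ∈ A, ∀ q ∈ A, p.2 < q.2 → G p.1 q.1 < q.2 - p.2

/-- The slots occupied by type `m` in the allocation `A`. Its greatest element, if any, is the last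
slot of `m` recorded by the dynamic program. -/
def slotsOfType {T S : Type*} (A : Set (T × S)) (m : T) : Set S :=
  {s | (m, s) ∈ A}

theorem injOn_insert_of_forall_ne {α β : Type*} {f : α → β} {s : Set α} {a : α}
    (hs : Set.InjOn f s) (hne : ∀ x ∈ s, f x ≠ f a) : Set.InjOn f (insert a s) := by
  have hfresh : f a ∉ f '' s := fun ⟨x, hx, hxa⟩ => hne x hx hxa
  exact (Set.injOn_insert fun ha => hne a ha rfl).2 ⟨hs, hfresh⟩

theorem ObeysGapRules.insert_of_forall_le {T S : Type*} [Preorder S] [Sub S] {G : T → T → S}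
    {A : Set (T × S)} {l : T} {t : S} (hA : ObeysGapRules G A) (hle : ∀ p ∈ A, p.2 ≤ t)
    (hgap : ∀ p ∈ A, G p.1 l < t - p.2) :
    ObeysGapRules G (insert (l, t) A) := by
  rintro p (rfl | hp) q (rfl | hq) hpq
  · exact absurd hpq (lt_irrefl _)
  · exact absurd hpq (hle q hq).not_gt
  · exact hgap p hp
  · exact hA p hp q hq hpq

theorem lt_apply_of_forall_isGreatest {S R : Type*} [LinearOrder S] [Preorder R] {f : S → R}
    {B : Set S} {g : R} {s : S} (hf : Antitone f) (hB : B.Finite)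
    (hgreatest : ∀ b, IsGreatest B b → g < f b) (hs : s ∈ B) : g < f s := by
  obtain ⟨b, hb, hmax⟩ := B.exists_max_image id hB ⟨s, hs⟩
  calc
    g < f b := hgreatest b ⟨hb, hmax⟩
    _ ≤ f s := hf (hmax s hs)

theorem dp_augmentation_general {T S : Type*} [AddCommSemigroup S] [LinearOrder S] [AddLeftMono S]
    [Sub S] [OrderedSub S] {G : T → T → S} {A : Set (T × S)} {l : T} {t : S}
    (hfin : ∀ m, (slotsOfType A m).Finite) (hdist : Set.InjOn Prod.snd A)
    (hgap : ObeysGapRules G A) (hlt : ∀ p ∈ A, p.2 < t)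
    (hlast : ∀ m s, IsGreatest (slotsOfType A m) s → G m l < t - s) :
    Set.InjOn Prod.snd (insert (l, t) A) ∧ ObeysGapRules G (insert (l, t) A) := by
  have hgap_new : ∀ p ∈ A, G p.1 l < t - p.2 := fun p hp =>
    lt_apply_of_forall_isGreatest antitone_const_tsub (hfin p.1) (hlast p.1) hp
  exact ⟨injOn_insert_of_forall_ne hdist fun p hp => (hlt p hp).ne,
    hgap.insert_of_forall_le (fun p hp => (hlt p hp).le) hgap_new⟩

/-- **Augmentation property of the dynamic program.** Let `A` be a finite allocation (a finite
set of (type, slot) pairs with pairwise distinct slots) obeying the gap rules of the matrix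
`G`. If `s*` is a slot strictly larger than every slot used in `A`, and for every type `m`
appearing in `A` the largest slot `sm` occupied by type `m` satisfies `s* − sm > G m l`, then
`A ∪ {(l, s*)}` is again an allocation (distinct slots) obeying the gap rules. -/
theorem dp_augmentation
    (k : ℕ) (G : Fin k → Fin k → ℕ) (A : Finset (Fin k × ℕ))
    (hdist : ∀ p ∈ A, ∀ q ∈ A, p.2 = q.2 → p = q)
    (hgap : ∀ p ∈ A, ∀ q ∈ A, p.2 < q.2 → G p.1 q.1 < q.2 - p.2)
    (l : Fin k) (sstar : ℕ)
    (hlast : ∀ p ∈ A, p.2 < sstar)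
    (hnew : ∀ m : Fin k, ∀ sm : ℕ, (m, sm) ∈ A → (∀ s : ℕ, (m, s) ∈ A → s ≤ sm) →
        G m l < sstar - sm) :
    (∀ p ∈ insert (l, sstar) A, ∀ q ∈ insert (l, sstar) A, p.2 = q.2 → p = q) ∧
    (∀ p ∈ insert (l, sstar) A, ∀ q ∈ insert (l, sstar) A, p.2 < q.2 →
        G p.1 q.1 < q.2 - p.2) := by
  have hfin (m : Fin k) : (slotsOfType (A : Set (Fin k × ℕ)) m).Finite :=
    A.finite_toSet.preimage (Prod.mk_right_injective m).injOn
  simpa only [Set.InjOn, ObeysGapRules, ← Finset.coe_insert, Finset.mem_coe] using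
    dp_augmentation_general hfin (fun p hp q hq => hdist p hp q hq) hgap hlast
      fun m s hs => hnew m s hs.1 fun _ hr => hs.2 hr
end

section
/- In the single-parameter environment with reserve prices and the payment rule of Algorithm 3, an agent whose true value is below her reserve cannot profit from overbidding: fix the other agents' bids b_{−i} and the reserves r, and suppose v_i < r_i. Then for any bid b_i ≥ r_i and any welfare-maximizing choices of the outcomes ω (for bids (b_i, b_{−i})) and ω' (for bids (r_i, b_{−i})), agent i's utility v_i · x_i(ω) − p_i is at most 0. -/
open Finset

/-- The welfare of outcome `ω` for bid profile `b` with reserves `r`: the sum of `b j * x j ω`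
over the accepted agents, i.e. those with `b j ≥ r j`. -/
noncomputable def welfare {Ω : Type*} [Fintype Ω] {n : ℕ}
    (x : Fin n → Ω → ℝ) (r b : Fin n → ℝ) (ω : Ω) : ℝ :=
  ∑ j, if r j ≤ b j then b j * x j ω else 0

/-- The payment charged by Algorithm 3 to an accepted agent `i`, where `ω` is the selected
welfare-maximizing outcome for the submitted bids `b` and `ω'` is a welfare-maximizing outcome
for the profile in which `b i` is replaced by the reserve `r i`:
`p_i = Σ_{j ∈ B', j ≠ i} b j x j ω' − Σ_{j ∈ B', j ≠ i} b j x j ω + r i · x i ω'`. -/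
noncomputable def payment {Ω : Type*} [Fintype Ω] {n : ℕ}
    (x : Fin n → Ω → ℝ) (r b : Fin n → ℝ) (i : Fin n) (ω ω' : Ω) : ℝ :=
  (∑ j, if j ≠ i ∧ r j ≤ b j then b j * x j ω' else 0)
    - (∑ j, if j ≠ i ∧ r j ≤ b j then b j * x j ω else 0)
    + r i * x i ω'

/-- The utility of agent `i` with true per-unit value `vi` when she bids `β` (the other bids
being `b`), `ω` is the selected outcome for the resulting profile and `ω'` the outcome used in
the payment rule: `vi * x i ω − p_i` if she is accepted (`β ≥ r i`), and `0` otherwise. -/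
noncomputable def utility {Ω : Type*} [Fintype Ω] {n : ℕ}
    (x : Fin n → Ω → ℝ) (r : Fin n → ℝ) (vi : ℝ) (i : Fin n) (b : Fin n → ℝ) (β : ℝ)
    (ω ω' : Ω) : ℝ :=
  if r i ≤ β then vi * x i ω - payment x r (Function.update b i β) i ω ω' else 0

section Payment

variable {Ω : Type*} {n : ℕ}

/-- The welfare that outcome `ω` gives to the accepted agents other than `i`, in the indicator
form of the sums in `payment`. -/
noncomputable def othersWelfare (x : Fin n → Ω → ℝ) (r b : Fin n → ℝ) (i : Fin n) (ω : Ω) : ℝ :=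
  ∑ j, if j ≠ i ∧ r j ≤ b j then b j * x j ω else 0

lemma othersWelfare_update (x : Fin n → Ω → ℝ) (r b : Fin n → ℝ) (i : Fin n) (β : ℝ) (ω : Ω) :
    othersWelfare x r (Function.update b i β) i ω = othersWelfare x r b i ω := by
  refine sum_congr rfl fun j _ ↦ ?_
  by_cases hj : j = i <;> simp [hj]

variable [Fintype Ω]

lemma welfare_eq_othersWelfare_add (x : Fin n → Ω → ℝ) {r b : Fin n → ℝ} {i : Fin n}
    (hi : r i ≤ b i) (ω : Ω) :
    welfare x r b ω = othersWelfare x r b i ω + b i * x i ω := by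
  have others_eq_sum_erase : othersWelfare x r b i ω =
      ∑ j ∈ univ.erase i, if r j ≤ b j then b j * x j ω else 0 := by
    rw [othersWelfare, ← sum_erase univ (a := i) (by simp)]
    exact sum_congr rfl fun j hj ↦ by simp [ne_of_mem_erase hj]
  rw [others_eq_sum_erase, welfare, ← sum_erase_add _ _ (mem_univ i), if_pos hi]

lemma welfare_update_reserve (x : Fin n → Ω → ℝ) (r b : Fin n → ℝ) (i : Fin n) (ω : Ω) :
    welfare x r (Function.update b i (r i)) ω = othersWelfare x r b i ω + r i * x i ω := by
  rw [welfare_eq_othersWelfare_add x (i := i) (by simp), othersWelfare_update,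
    Function.update_self]

lemma payment_eq_othersWelfare (x : Fin n → Ω → ℝ) (r b : Fin n → ℝ) (i : Fin n) (ω ω' : Ω) :
    payment x r b i ω ω' =
      othersWelfare x r b i ω' - othersWelfare x r b i ω + r i * x i ω' :=
  rfl

lemma payment_update (x : Fin n → Ω → ℝ) (r b : Fin n → ℝ) (i : Fin n) (β : ℝ) (ω ω' : Ω) :
    payment x r (Function.update b i β) i ω ω' = payment x r b i ω ω' := by
  simp only [payment_eq_othersWelfare, othersWelfare_update]

-- The welfare difference is nonnegative because `ω'` is optimal for `(r i, b₋ᵢ)`, so the reserve is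
-- a floor for the per-unit price.
lemma payment_eq_reserve_mul_add (x : Fin n → Ω → ℝ) (r b : Fin n → ℝ) (i : Fin n) (ω ω' : Ω) :
    payment x r b i ω ω' = r i * x i ω +
      (welfare x r (Function.update b i (r i)) ω' -
        welfare x r (Function.update b i (r i)) ω) := by
  rw [payment_eq_othersWelfare, welfare_update_reserve, welfare_update_reserve]
  ring

lemma reserve_mul_le_payment (x : Fin n → Ω → ℝ) (r b : Fin n → ℝ) (i : Fin n) {ω ω' : Ω}
    (h : welfare x r (Function.update b i (r i)) ω ≤
      welfare x r (Function.update b i (r i)) ω') :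
    r i * x i ω ≤ payment x r b i ω ω' := by
  rw [payment_eq_reserve_mul_add]
  exact le_add_of_nonneg_right (sub_nonneg.2 h)

theorem no_profit_from_overbidding_general (x : Fin n → Ω → ℝ) (r b : Fin n → ℝ) (i : Fin n)
    (vi β : ℝ) (hvi : vi ≤ r i) (ω ω' : Ω) (hx : 0 ≤ x i ω)
    (hω' : ∀ ω₀, welfare x r (Function.update b i (r i)) ω₀
            ≤ welfare x r (Function.update b i (r i)) ω') :
    utility x r vi i b β ω ω' ≤ 0 := by
  rw [utility]
  split_ifs
  · rw [payment_update, sub_nonpos]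
    calc
      vi * x i ω ≤ r i * x i ω := mul_le_mul_of_nonneg_right hvi hx
      _ ≤ payment x r b i ω ω' := reserve_mul_le_payment x r b i (hω' ω)
  · exact le_rfl

end Payment

/-- **No profitable overbidding below reserve** under the payment rule of Algorithm 3: if
agent `i`'s true value satisfies `vi < r i`, then for any bid `bi ≥ r i` and any
welfare-maximizing outcomes `ω` (for the profile `(bi, b₋ᵢ)`) and `ω'` (for the profile
`(r i, b₋ᵢ)`), her utility `vi * x i ω − p_i` is at most `0`. -/
theorem no_profit_from_overbidding {Ω : Type*} [Fintype Ω] [Nonempty Ω] {n : ℕ}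
    (x : Fin n → Ω → ℝ) (hx : ∀ i ω, 0 ≤ x i ω)
    (r b : Fin n → ℝ) (i : Fin n) (vi bi : ℝ)
    (hvi : vi < r i) (hbi : r i ≤ bi)
    (ω ω' : Ω)
    (hω : ∀ ω₀, welfare x r (Function.update b i bi) ω₀
            ≤ welfare x r (Function.update b i bi) ω)
    (hω' : ∀ ω₀, welfare x r (Function.update b i (r i)) ω₀
            ≤ welfare x r (Function.update b i (r i)) ω') :
    vi * x i ω - payment x r (Function.update b i bi) i ω ω' ≤ 0 := by
  have hu := no_profit_from_overbidding_general x r b i vi bi hvi.le ω ω' (hx i ω) hω'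
  rwa [utility, if_pos hbi] at hu
end
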